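/- If the metric of a Kenmotsu manifold of dimension 2n+1 is a gradient almost *-Ricci soliton with potential function f and soliton function λ, then the curvature tensor satisfies R(X,Y)Df = (∇_Y Q)X - (∇_X Q)Y + Y(λ)X - X(λ)Y + η(X)Y - η(Y)X for all vector fields X, Y. -/

import Mathlib

/-- An abstract algebraic model of a `(2n+1)`-dimensional Kenmotsu manifold:
`C` plays the role of the ring of smooth functions on the manifold and vector
fields are modelled as `ℝ`-derivations of `C`.  A global orthonormal frame `e`
is included in order to express traces (Ricci tensor, scalar curvature). -/
structure KenmotsuManifold (n : ℕ) (C : Type*) [CommRing C] [Algebra ℝ C] where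
  /-- the Riemannian metric -/
  g : Derivation ℝ C C → Derivation ℝ C C → C
  /-- the structure `(1,1)`-tensor field -/
  φ : Derivation ℝ C C → Derivation ℝ C C
  /-- the Reeb (characteristic) vector field -/
  ξ : Derivation ℝ C C
  /-- the contact `1`-form -/
  η : Derivation ℝ C C → C
  /-- the Levi-Civita connection -/
  nabla : Derivation ℝ C C → Derivation ℝ C C → Derivation ℝ C C
  /-- a global orthonormal frame, used to take traces -/
  e : Fin (2 * n + 1) → Derivation ℝ C C
  g_symm : ∀ X Y, g X Y = g Y X
  g_add_left : ∀ X Y Z, g (X + Y) Z = g X Z + g Y Z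
  g_smul_left : ∀ (f : C) (X Y), g (f • X) Y = f * g X Y
  g_nondeg : ∀ X, (∀ Y, g X Y = 0) → X = 0
  g_frame : ∀ i j, g (e i) (e j) = if i = j then 1 else 0
  frame_span : ∀ X : Derivation ℝ C C, X = ∑ i, g X (e i) • e i
  phi_phi : ∀ X, φ (φ X) = -X + η X • ξ
  phi_linear : ∀ (f : C) (X Y), φ (f • X + Y) = f • φ X + φ Y
  eta_xi : η ξ = 1
  eta_def : ∀ X, η X = g X ξ
  compat_phi : ∀ X Y, g (φ X) (φ Y) = g X Y - η X * η Y
  nabla_add_left : ∀ X Y Z, nabla (X + Y) Z = nabla X Z + nabla Y Z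
  nabla_smul_left : ∀ (f : C) (X Y), nabla (f • X) Y = f • nabla X Y
  nabla_add_right : ∀ X Y Z, nabla X (Y + Z) = nabla X Y + nabla X Z
  nabla_leibniz : ∀ (X) (f : C) (Y), nabla X (f • Y) = X f • Y + f • nabla X Y
  torsion_free : ∀ X Y, nabla X Y - nabla Y X = ⁅X, Y⁆
  metric_compat : ∀ X Y Z, X (g Y Z) = g (nabla X Y) Z + g Y (nabla X Z)
  /-- the Kenmotsu condition `(∇_X φ)Y = g(φX,Y)ξ - η(Y)φX` -/
  kenmotsu : ∀ X Y, nabla X (φ Y) - φ (nabla X Y) = g (φ X) Y • ξ - η Y • φ X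

namespace KenmotsuManifold

variable {n : ℕ} {C : Type*} [CommRing C] [Algebra ℝ C] (K : KenmotsuManifold n C)

/-- the Riemann curvature tensor `R(X,Y)Z = ∇_X∇_Y Z - ∇_Y∇_X Z - ∇_{[X,Y]}Z` -/
def Rm (X Y Z : Derivation ℝ C C) : Derivation ℝ C C :=
  K.nabla X (K.nabla Y Z) - K.nabla Y (K.nabla X Z) - K.nabla ⁅X, Y⁆ Z

/-- the Ricci tensor `S(X,Y) = trace (Z ↦ R(Z,X)Y)` -/
def S (X Y : Derivation ℝ C C) : C := ∑ i, K.g (K.Rm (K.e i) X Y) (K.e i)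

/-- the Ricci operator `Q`, `g(QX,Y) = S(X,Y)` -/
def Q (X : Derivation ℝ C C) : Derivation ℝ C C := ∑ i, K.S X (K.e i) • K.e i

/-- the scalar curvature `r` -/
def r : C := ∑ i, K.S (K.e i) (K.e i)

/-- the `*`-Ricci tensor `S*(X,Y) = (1/2) trace (Z ↦ R(X,φY)φZ)` -/
noncomputable def Sstar (X Y : Derivation ℝ C C) : C :=
  (2 : ℝ)⁻¹ • ∑ i, K.g (K.Rm X (K.φ Y) (K.φ (K.e i))) (K.e i)

/-- the covariant derivative `(∇_X Q)Y` of the Ricci operator -/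
def nablaQ (X Y : Derivation ℝ C C) : Derivation ℝ C C :=
  K.nabla X (K.Q Y) - K.Q (K.nabla X Y)

/-- the Lie derivative `(£_V g)(X,Y)` of the metric -/
def lieG (V X Y : Derivation ℝ C C) : C :=
  V (K.g X Y) - K.g ⁅V, X⁆ Y - K.g X ⁅V, Y⁆

/-- the Lie derivative `(£_V S)(X,Y)` of the Ricci tensor -/
def lieS (V X Y : Derivation ℝ C C) : C :=
  V (K.S X Y) - K.S ⁅V, X⁆ Y - K.S X ⁅V, Y⁆

/-- `g` is a `*`-Ricci soliton with potential vector field `V` and soliton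
constant `l`: `£_V g + 2S* + 2l g = 0`. -/
def IsStarRicciSoliton (V : Derivation ℝ C C) (l : ℝ) : Prop :=
  ∀ X Y, K.lieG V X Y + 2 * K.Sstar X Y + (2 * l) • K.g X Y = 0

/-- `g` is a gradient almost `*`-Ricci soliton with potential function `f`
(with gradient `F`, i.e. `g(F,X) = Xf`) and soliton function `l`:
`Hess f + S* + l g = 0`. -/
def IsGradAlmostStarRicciSoliton (f : C) (F : Derivation ℝ C C) (l : C) : Prop :=
  (∀ X, K.g F X = X f) ∧ ∀ X Y, K.g (K.nabla X F) Y + K.Sstar X Y + l * K.g X Y = 0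

/-- `M` is `η`-Einstein: `S = α g + β η⊗η`. -/
def IsEtaEinstein : Prop :=
  ∃ α β : C, ∀ X Y, K.S X Y = α * K.g X Y + β * (K.η X * K.η Y)

end KenmotsuManifold

namespace KenmotsuManifold

section helpers

variable {n : ℕ} {C : Type*} [CommRing C] [Algebra ℝ C] (K : KenmotsuManifold n C)

lemma two_cancel {c : C} (h : c + c = 0) : c = 0 := by
  have h2 : (2 : ℝ) • c = 0 := by rw [two_smul]; exact h
  have := congrArg (fun t => (2 : ℝ)⁻¹ • t) h2
  simpa [smul_smul] using this

lemma g_add_r (X Y Z : Derivation ℝ C C) : K.g X (Y + Z) = K.g X Y + K.g X Z := by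
  rw [K.g_symm, K.g_add_left, K.g_symm Y, K.g_symm Z]

lemma g_smul_r (c : C) (X Y : Derivation ℝ C C) : K.g X (c • Y) = c * K.g X Y := by
  rw [K.g_symm, K.g_smul_left, K.g_symm Y]

lemma g_neg_l (X Y : Derivation ℝ C C) : K.g (-X) Y = -K.g X Y := by
  have := K.g_smul_left (-1) X Y
  simpa using this

lemma g_neg_r (X Y : Derivation ℝ C C) : K.g X (-Y) = -K.g X Y := by
  rw [K.g_symm, K.g_neg_l, K.g_symm Y]

lemma g_sub_l (X Y Z : Derivation ℝ C C) : K.g (X - Y) Z = K.g X Z - K.g Y Z := by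
  rw [sub_eq_add_neg, K.g_add_left, K.g_neg_l, sub_eq_add_neg]

lemma g_sub_r (X Y Z : Derivation ℝ C C) : K.g X (Y - Z) = K.g X Y - K.g X Z := by
  rw [sub_eq_add_neg, K.g_add_r, K.g_neg_r, sub_eq_add_neg]

lemma g_zero_l (Y : Derivation ℝ C C) : K.g 0 Y = 0 := by
  have := K.g_smul_left 0 0 Y
  simpa using this

lemma g_zero_r (Y : Derivation ℝ C C) : K.g Y 0 = 0 := by
  rw [K.g_symm, K.g_zero_l]

lemma g_sum_l {ι : Type*} (s : Finset ι) (V : ι → Derivation ℝ C C) (Y : Derivation ℝ C C) :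
    K.g (∑ i ∈ s, V i) Y = ∑ i ∈ s, K.g (V i) Y := by
  classical
  induction s using Finset.induction_on with
  | empty => simp [g_zero_l]
  | insert a s ha ih => rw [Finset.sum_insert ha, Finset.sum_insert ha, K.g_add_left, ih]

lemma g_ext {X Y : Derivation ℝ C C} (h : ∀ W, K.g X W = K.g Y W) : X = Y := by
  refine sub_eq_zero.mp (K.g_nondeg _ fun W => ?_)
  rw [K.g_sub_l, h, sub_self]

/-- Parseval. -/
lemma g_parseval (X Y : Derivation ℝ C C) :
    ∑ i, K.g X (K.e i) * K.g (K.e i) Y = K.g X Y := by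
  conv_rhs => rw [K.frame_span X, K.g_sum_l]
  simp only [K.g_smul_left]

lemma phi_add (X Y : Derivation ℝ C C) : K.φ (X + Y) = K.φ X + K.φ Y := by
  simpa using K.phi_linear 1 X Y

lemma phi_zero : K.φ 0 = 0 := by
  have := K.phi_add 0 0
  simpa using this

lemma phi_smul (c : C) (X : Derivation ℝ C C) : K.φ (c • X) = c • K.φ X := by
  simpa [K.phi_zero] using K.phi_linear c X 0

lemma phi_neg (X : Derivation ℝ C C) : K.φ (-X) = -K.φ X := by
  simpa using K.phi_smul (-1) X

lemma phi_sub (X Y : Derivation ℝ C C) : K.φ (X - Y) = K.φ X - K.φ Y := by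
  rw [sub_eq_add_neg, K.phi_add, K.phi_neg, sub_eq_add_neg]

lemma nabla_neg_r (X Y : Derivation ℝ C C) : K.nabla X (-Y) = -K.nabla X Y := by
  simpa using K.nabla_leibniz X (-1) Y

lemma nabla_sub_r (X Y Z : Derivation ℝ C C) :
    K.nabla X (Y - Z) = K.nabla X Y - K.nabla X Z := by
  rw [sub_eq_add_neg, K.nabla_add_right, K.nabla_neg_r, sub_eq_add_neg]

lemma nabla_neg_l (X Y : Derivation ℝ C C) : K.nabla (-X) Y = -K.nabla X Y := by
  simpa using K.nabla_smul_left (-1) X Y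

lemma nabla_sub_l (X Y Z : Derivation ℝ C C) :
    K.nabla (X - Y) Z = K.nabla X Z - K.nabla Y Z := by
  rw [sub_eq_add_neg, K.nabla_add_left, K.nabla_neg_l, sub_eq_add_neg]

/-! ### curvature symmetries -/

lemma Rm_eq (X Y Z : Derivation ℝ C C) : K.Rm X Y Z =
    K.nabla X (K.nabla Y Z) - K.nabla Y (K.nabla X Z)
      - (K.nabla (K.nabla X Y) Z - K.nabla (K.nabla Y X) Z) := by
  rw [Rm, ← K.torsion_free, K.nabla_sub_l]

lemma Rm_anti (X Y Z : Derivation ℝ C C) : K.Rm X Y Z = -K.Rm Y X Z := by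
  simp only [Rm_eq]; abel

lemma Rm_smul (c : C) (X Y Z : Derivation ℝ C C) : K.Rm (c • X) Y Z = c • K.Rm X Y Z := by
  simp only [Rm_eq, K.nabla_smul_left, K.nabla_leibniz, K.nabla_add_left]
  module

lemma Rm_add (X X' Y Z : Derivation ℝ C C) :
    K.Rm (X + X') Y Z = K.Rm X Y Z + K.Rm X' Y Z := by
  simp only [Rm_eq, K.nabla_add_right, K.nabla_add_left]
  abel

lemma Rm_smul2 (c : C) (X Y Z : Derivation ℝ C C) : K.Rm X (c • Y) Z = c • K.Rm X Y Z := by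
  rw [K.Rm_anti, K.Rm_smul, K.Rm_anti X Y]; module

lemma Rm_add2 (X Y Y' Z : Derivation ℝ C C) :
    K.Rm X (Y + Y') Z = K.Rm X Y Z + K.Rm X Y' Z := by
  rw [K.Rm_anti, K.Rm_add, K.Rm_anti X Y, K.Rm_anti X Y']; abel

lemma bianchi (X Y Z : Derivation ℝ C C) : K.Rm X Y Z + K.Rm Y Z X + K.Rm Z X Y = 0 := by
  have j := lie_jacobi X Y Z
  simp only [← K.torsion_free, K.nabla_sub_r, K.nabla_sub_l] at j
  simp only [Rm_eq]
  rw [← j]; abel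

lemma skew (X Y Z W : Derivation ℝ C C) : K.g (K.Rm X Y Z) W = -K.g (K.Rm X Y W) Z := by
  have h1 : ⁅X, Y⁆ (K.g Z W) = X (Y (K.g Z W)) - Y (X (K.g Z W)) := Derivation.commutator_apply ..
  simp only [K.metric_compat, map_add] at h1
  simp only [Rm, K.g_sub_l]
  rw [K.g_symm (K.nabla X (K.nabla Y W)) Z, K.g_symm (K.nabla Y (K.nabla X W)) Z,
    K.g_symm (K.nabla ⁅X, Y⁆ W) Z]
  linear_combination -h1

lemma g_bianchi (X Y Z W : Derivation ℝ C C) :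
    K.g (K.Rm X Y Z) W + K.g (K.Rm Y Z X) W + K.g (K.Rm Z X Y) W = 0 := by
  rw [← K.g_add_left, ← K.g_add_left, K.bianchi, K.g_zero_l]

lemma g_anti (X Y Z W : Derivation ℝ C C) : K.g (K.Rm X Y Z) W = -K.g (K.Rm Y X Z) W := by
  rw [K.Rm_anti, K.g_neg_l]

lemma pair (X Y Z W : Derivation ℝ C C) : K.g (K.Rm X Y Z) W = K.g (K.Rm Z W X) Y := by
  refine sub_eq_zero.mp (two_cancel ?_)
  have b1 := K.g_bianchi X Y Z W
  have b2 := K.g_bianchi Y Z W X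
  have b3 := K.g_bianchi Z W X Y
  have b4 := K.g_bianchi W X Y Z
  have s1 := K.skew Y Z X W
  have s2 := K.skew Z X Y W
  have s3 := K.skew Z W Y X
  have s4 := K.skew W Y Z X
  have s5 := K.skew W X Z Y
  have s6 := K.skew X Y W Z
  have a1 := K.g_anti X Z W Y
  have a2 := K.g_anti Y W X Z
  linear_combination b1 + b2 - b3 - b4 - s1 - s3 - s4 + a2 - s2 + a1 + s5 + s6

/-! ### `φξ` -/

lemma g_xi_r (X : Derivation ℝ C C) : K.g X K.ξ = K.η X := (K.eta_def X).symm

lemma g_xi_l (X : Derivation ℝ C C) : K.g K.ξ X = K.η X := by rw [K.g_symm, K.g_xi_r]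

lemma eta_add (X Y : Derivation ℝ C C) : K.η (X + Y) = K.η X + K.η Y := by
  simp only [K.eta_def, K.g_add_left]

lemma eta_sub (X Y : Derivation ℝ C C) : K.η (X - Y) = K.η X - K.η Y := by
  simp only [K.eta_def, K.g_sub_l]

lemma eta_neg (X : Derivation ℝ C C) : K.η (-X) = -K.η X := by
  simp only [K.eta_def, K.g_neg_l]

lemma eta_smul (c : C) (X : Derivation ℝ C C) : K.η (c • X) = c * K.η X := by
  simp only [K.eta_def, K.g_smul_left]

lemma eta_phi_smul (X : Derivation ℝ C C) : K.η (K.φ X) • K.ξ = K.η X • K.φ K.ξ := by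
  have h1 := K.phi_phi (K.φ X)
  rw [K.phi_phi X, K.phi_add, K.phi_neg, K.phi_smul] at h1
  exact (add_left_cancel h1).symm

lemma phi_xi : K.φ K.ξ = K.η (K.φ K.ξ) • K.ξ := by
  rw [K.eta_phi_smul, K.eta_xi, one_smul]

lemma eta_phi (X : Derivation ℝ C C) : K.η (K.φ X) = K.η (K.φ K.ξ) * K.η X := by
  have := congrArg K.η (K.eta_phi_smul X)
  rw [K.eta_smul, K.eta_smul, K.eta_xi] at this
  linear_combination this

lemma a_sq : K.η (K.φ K.ξ) * K.η (K.φ K.ξ) = 0 := by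
  have h := K.eta_phi (K.φ K.ξ)
  rw [K.phi_phi, K.eta_add, K.eta_neg, K.eta_smul] at h
  linear_combination -h + K.η K.ξ * K.eta_xi - K.eta_xi + K.eta_xi

lemma phi_skew (X Y : Derivation ℝ C C) : K.g (K.φ X) Y =
    -K.g X (K.φ Y) + 2 * K.η (K.φ K.ξ) * K.η X * K.η Y := by
  have h := K.compat_phi X (K.φ Y)
  rw [K.phi_phi, K.g_add_r, K.g_neg_r, K.g_smul_r, K.g_xi_r, K.eta_phi X, K.eta_phi Y] at h
  linear_combination -h

lemma eta_nabla_xi (X : Derivation ℝ C C) : K.η (K.nabla X K.ξ) = 0 := by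
  apply two_cancel
  have h := K.metric_compat X K.ξ K.ξ
  rw [K.g_xi_r, K.g_xi_r, K.g_xi_l, K.eta_xi, Derivation.map_one_eq_zero] at h
  exact h.symm

lemma a_const (X : Derivation ℝ C C) : X (K.η (K.φ K.ξ)) = 0 := by
  have h := congrArg K.η (K.kenmotsu X K.ξ)
  rw [K.phi_xi, K.nabla_leibniz] at h
  simp only [K.eta_sub, K.eta_add, K.eta_smul, K.g_xi_r, K.eta_xi, K.eta_phi X,
    K.eta_phi (K.nabla X K.ξ), K.eta_nabla_xi] at h
  linear_combination h

lemma a_phi_xi : K.η (K.φ K.ξ) • K.φ K.ξ = 0 := by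
  rw [K.phi_xi, smul_smul, ← K.phi_xi, K.a_sq, zero_smul]

lemma nabla_xi_a (X : Derivation ℝ C C) :
    K.nabla X K.ξ = X - K.η X • K.ξ - K.η (K.φ K.ξ) • K.φ X := by
  have h := K.kenmotsu X K.ξ
  have e1 : K.nabla X (K.φ K.ξ) = K.η (K.φ K.ξ) • K.nabla X K.ξ := by
    conv_lhs => rw [K.phi_xi, K.nabla_leibniz, K.a_const]
    simp
  rw [e1, K.g_xi_r, K.eta_xi, one_smul, K.eta_phi X] at h
  have a2 := K.a_sq
  have h2 := congrArg K.φ h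
  simp only [K.phi_sub, K.phi_smul, K.phi_phi, K.eta_nabla_xi] at h2
  have h3 := congrArg (fun V => K.η (K.φ K.ξ) • V) h
  simp only [smul_sub, smul_smul] at h3
  have h4 := K.a_phi_xi
  set a := K.η (K.φ K.ξ) with ha
  have z1 : (a * (a * K.η X)) = 0 := by linear_combination K.η X * a2
  rw [a2, z1] at h3
  have z2 : (a * K.η X) • K.φ K.ξ = 0 := by rw [mul_comm, mul_smul, h4, smul_zero]
  rw [z2] at h2
  simp only [zero_smul] at h2 h3
  linear_combination (norm := module) h2 + h3

lemma Rm_xi_a (X Y : Derivation ℝ C C) : K.Rm X Y K.ξ =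
    K.η X • (Y - (2 * K.η (K.φ K.ξ)) • K.φ Y) - K.η Y • (X - (2 * K.η (K.φ K.ξ)) • K.φ X) := by
  have key : ∀ X Y : Derivation ℝ C C, K.nabla X (K.nabla Y K.ξ) - K.nabla (K.nabla X Y) K.ξ =
      (K.η X * K.η Y - K.g X Y) • K.ξ - K.η Y • (X - K.η X • K.ξ
        - (2 * K.η (K.φ K.ξ)) • K.φ X) := by
    intro X Y
    have hk := K.kenmotsu X Y
    have hn := K.nabla_xi_a X
    have he : X (K.η Y) = K.η (K.nabla X Y) + K.g Y (K.nabla X K.ξ) := by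
      rw [K.eta_def, K.metric_compat, K.g_xi_r]
    rw [K.g_symm Y, hn] at he
    simp only [K.g_sub_l, K.g_smul_left, K.g_xi_l] at he
    rw [K.nabla_xi_a Y, K.nabla_xi_a (K.nabla X Y), K.nabla_sub_r, K.nabla_sub_r,
      K.nabla_leibniz, K.nabla_leibniz, K.a_const, hn, he]
    linear_combination (norm := module) (-K.η (K.φ K.ξ)) • hk
  have h1 := key X Y
  have h2 := key Y X
  rw [K.g_symm Y X] at h2
  rw [K.Rm_eq]
  linear_combination (norm := module) h1 - h2

lemma a_phi (Y : Derivation ℝ C C) : K.η (K.φ K.ξ) • K.φ Y = 0 := by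
  refine K.g_nondeg _ fun Z => ?_
  rw [K.g_smul_left]
  have b := K.g_bianchi K.ξ Y Z K.ξ
  rw [K.skew K.ξ Y, K.skew Y Z, K.skew Z K.ξ] at b
  simp only [K.Rm_xi_a, K.g_sub_l, K.g_smul_left, K.eta_xi, K.g_xi_r, K.g_xi_l, K.eta_phi Y,
    K.eta_phi Z] at b
  rw [K.g_symm Z Y, K.phi_xi] at b
  simp only [K.g_smul_left, K.g_xi_l, K.eta_smul, K.eta_xi] at b
  have s := K.phi_skew Z Y
  rw [K.g_symm Z (K.φ Y)] at s
  have a2 := K.a_sq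
  refine two_cancel (two_cancel ?_)
  set a := K.η (K.φ K.ξ)
  linear_combination b + 2 * a * s + 4 * K.η Y * K.η Z * a2

lemma a_zero (hn : n ≠ 0) : K.η (K.φ K.ξ) = 0 := by
  have h : ∀ X, K.η (K.φ K.ξ) * K.g X X = K.η (K.φ K.ξ) * (K.g X K.ξ * K.g K.ξ X) := by
    intro X
    have h1 := K.a_phi (K.φ X)
    rw [K.phi_phi] at h1
    have h2 := congrArg (fun V => K.g V X) h1
    simp only [K.g_smul_left, K.g_add_left, K.g_neg_l, K.g_zero_l, K.g_xi_l] at h2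
    rw [K.g_xi_l, K.g_xi_r]
    linear_combination -h2
  have h3 : ∑ i, K.η (K.φ K.ξ) * K.g (K.e i) (K.e i)
      = ∑ i, K.η (K.φ K.ξ) * (K.g K.ξ (K.e i) * K.g (K.e i) K.ξ) :=
    Finset.sum_congr rfl fun i _ => by rw [h, mul_comm (K.g (K.e i) K.ξ)]
  rw [← Finset.mul_sum, ← Finset.mul_sum, K.g_parseval, K.g_xi_r, K.eta_xi] at h3
  simp only [K.g_frame] at h3
  simp at h3
  have h4 : (2 * (n : ℝ)) • K.η (K.φ K.ξ) = 0 := by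
    rw [Algebra.smul_def]
    simp only [map_mul, map_ofNat, map_natCast]
    linear_combination h3
  have h5 : (2 * (n : ℝ)) ≠ 0 := by positivity
  have := congrArg (fun t => (2 * (n : ℝ))⁻¹ • t) h4
  simpa only [smul_smul, inv_mul_cancel₀ h5, one_smul, smul_zero] using this

/-! ### the regular case -/

section regular

variable {K}

lemma phi_xi0 (ha : K.η (K.φ K.ξ) = 0) : K.φ K.ξ = 0 := by rw [K.phi_xi, ha, zero_smul]

lemma eta_phi0 (ha : K.η (K.φ K.ξ) = 0) (X : Derivation ℝ C C) : K.η (K.φ X) = 0 := by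
  rw [K.eta_phi, ha, zero_mul]

lemma skew0 (ha : K.η (K.φ K.ξ) = 0) (X Y : Derivation ℝ C C) :
    K.g (K.φ X) Y = -K.g X (K.φ Y) := by
  rw [K.phi_skew, ha]; ring

lemma nabla_xi0 (ha : K.η (K.φ K.ξ) = 0) (X : Derivation ℝ C C) :
    K.nabla X K.ξ = X - K.η X • K.ξ := by
  rw [K.nabla_xi_a, ha]; module

lemma Rm_xi0 (ha : K.η (K.φ K.ξ) = 0) (X Y : Derivation ℝ C C) :
    K.Rm X Y K.ξ = K.η X • Y - K.η Y • X := by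
  rw [K.Rm_xi_a, ha]; module

lemma der_eta (ha : K.η (K.φ K.ξ) = 0) (X Y : Derivation ℝ C C) :
    X (K.η Y) = K.η (K.nabla X Y) + K.g X Y - K.η X * K.η Y := by
  rw [K.eta_def Y, K.metric_compat, K.g_xi_r, nabla_xi0 ha, K.g_sub_r, K.g_smul_r, K.g_symm Y X,
    K.g_xi_r]
  ring

lemma Rm_phi (ha : K.η (K.φ K.ξ) = 0) (X Y Z : Derivation ℝ C C) :
    K.Rm X Y (K.φ Z) = K.φ (K.Rm X Y Z) + K.g Y Z • K.φ X - K.g X Z • K.φ Y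
      + K.g X (K.φ Z) • Y - K.g Y (K.φ Z) • X := by
  have nphi : ∀ X Y : Derivation ℝ C C, K.nabla X (K.φ Y) =
      K.φ (K.nabla X Y) + K.g (K.φ X) Y • K.ξ - K.η Y • K.φ X := by
    intro X Y
    linear_combination (norm := module) K.kenmotsu X Y
  have key : ∀ X Y : Derivation ℝ C C,
      K.nabla X (K.nabla Y (K.φ Z)) - K.nabla (K.nabla X Y) (K.φ Z)
      = K.φ (K.nabla X (K.nabla Y Z)) - K.φ (K.nabla (K.nabla X Y) Z)
        + (K.g (K.φ X) (K.nabla Y Z) + K.g (K.φ Y) (K.nabla X Z)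
          - K.η Y * K.g (K.φ X) Z) • K.ξ
        - K.η (K.nabla Y Z) • K.φ X - K.η (K.nabla X Z) • K.φ Y
        + K.g (K.φ Y) Z • (X - K.η X • K.ξ)
        - (K.g X Z - K.η X * K.η Z) • K.φ Y + K.η Z • (K.η Y • K.φ X)
        + (K.g (K.φ X) Y * K.η Z - K.g (K.φ X) Y * K.η Z) • K.ξ := by
    intro X Y
    rw [nphi Y Z, nphi (K.nabla X Y) Z, K.nabla_sub_r, K.nabla_add_right, K.nabla_leibniz,
      K.nabla_leibniz, nphi X (K.nabla Y Z), K.metric_compat, nphi X Y, nabla_xi0 ha,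
      der_eta ha]
    simp only [K.g_sub_l, K.g_add_left, K.g_smul_left, K.g_xi_l]
    module
  have h1 := key X Y
  have h2 := key Y X
  rw [K.Rm_eq, K.Rm_eq]
  simp only [K.phi_sub]
  have e1 := skew0 ha X Z
  have e2 := skew0 ha Y Z
  rw [e1, e2] at h1 h2
  linear_combination (norm := module) h1 - h2

lemma frame_swap (ha : K.η (K.φ K.ξ) = 0) (X W : Derivation ℝ C C) :
    ∑ i, K.g (K.Rm (K.φ (K.e i)) X W) (K.e i) = -∑ i, K.g (K.Rm (K.e i) X W) (K.φ (K.e i)) := by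
  have l : ∀ i, K.g (K.Rm (K.φ (K.e i)) X W) (K.e i) =
      ∑ j, K.g (K.φ (K.e i)) (K.e j) * K.g (K.Rm (K.e j) X W) (K.e i) := by
    intro i
    have hh : ∀ U, K.g (K.Rm U X W) (K.e i) = -K.g U (K.Rm W (K.e i) X) := by
      intro U
      rw [K.pair, K.skew, K.g_symm]
    simp only [hh, mul_neg]
    rw [Finset.sum_neg_distrib, K.g_parseval]
  have r : ∀ j, K.g (K.Rm (K.e j) X W) (K.φ (K.e j)) =
      ∑ i, -(K.g (K.φ (K.e i)) (K.e j) * K.g (K.Rm (K.e j) X W) (K.e i)) := by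
    intro j
    rw [← K.g_parseval]
    refine Finset.sum_congr rfl fun i _ => ?_
    rw [skew0 ha (K.e i)]; ring
  simp only [l, r]
  rw [Finset.sum_comm, ← Finset.sum_neg_distrib]
  simp only [Finset.sum_neg_distrib, neg_neg]

lemma Sstar_eq (ha : K.η (K.φ K.ξ) = 0) (X Y : Derivation ℝ C C) :
    K.Sstar X Y = K.S X Y + (2 * n - 1) * K.g X Y + K.η X * K.η Y := by
  have h1 : ∑ i, K.g (K.Rm X (K.φ Y) (K.φ (K.e i))) (K.e i) =
      (2 : ℝ) • ∑ i, K.g (K.Rm (K.e i) X (K.φ Y)) (K.φ (K.e i)) := by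
    have t : ∀ i, K.g (K.Rm X (K.φ Y) (K.φ (K.e i))) (K.e i) =
        K.g (K.Rm (K.e i) X (K.φ Y)) (K.φ (K.e i))
          - K.g (K.Rm (K.φ (K.e i)) X (K.φ Y)) (K.e i) := by
      intro i
      have b := K.g_bianchi X (K.φ Y) (K.φ (K.e i)) (K.e i)
      rw [K.pair (K.φ Y), K.g_anti X (K.e i)] at b
      linear_combination b
    simp only [t]
    rw [Finset.sum_sub_distrib, frame_swap ha, two_smul]; ring
  rw [Sstar, h1, smul_smul, inv_mul_cancel₀ two_ne_zero, one_smul]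
  have t : ∀ i, K.g (K.Rm (K.e i) X (K.φ Y)) (K.φ (K.e i)) =
      K.g (K.Rm (K.e i) X Y) (K.e i)
      - K.η (K.Rm (K.e i) X Y) * K.η (K.e i)
      + K.g X Y * (K.g (K.e i) (K.e i) - K.g K.ξ (K.e i) * K.g (K.e i) K.ξ)
      - K.g Y (K.e i) * K.g (K.e i) (-K.φ (K.φ X))
      - K.g (K.φ Y) (K.e i) * K.g (K.e i) (K.φ X)
      - K.g X (K.φ Y) * K.g (K.e i) (K.φ (K.e i)) := by
    intro i
    rw [Rm_phi ha]
    simp only [K.g_sub_l, K.g_add_left, K.g_smul_left, K.compat_phi, K.g_neg_r, K.g_xi_l, K.g_xi_r]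
    have e1 := skew0 ha X (K.e i)
    have e2 : K.g (K.e i) (K.φ (K.φ X)) = -K.g X (K.e i) + K.η X * K.η (K.e i) := by
      rw [K.phi_phi, K.g_add_r, K.g_neg_r, K.g_smul_r, K.g_xi_r, K.g_symm X]
    have e3 := K.g_symm (K.e i) Y
    have e4 := K.g_symm (K.φ Y) (K.e i)
    have e5 := K.g_symm (K.e i) (K.φ X)
    rw [e2, e3, e4, e5, e1]
    ring
  have u : ∀ i, K.η (K.Rm (K.e i) X Y) * K.η (K.e i) =
      (K.η X * (K.g Y (K.e i) * K.g (K.e i) K.ξ)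
        - K.g X Y * (K.g K.ξ (K.e i) * K.g (K.e i) K.ξ)) := by
    intro i
    rw [K.eta_def (K.Rm (K.e i) X Y), K.skew, Rm_xi0 ha, K.g_sub_l, K.g_smul_left, K.g_smul_left,
      K.g_xi_l, K.g_xi_r, K.g_symm Y]
    ring
  have v : ∀ i, K.g (K.e i) (K.φ (K.e i)) = 0 := by
    intro i
    apply two_cancel
    have := skew0 ha (K.e i) (K.e i)
    rw [K.g_symm] at this
    linear_combination this
  simp only [t, u, v, mul_zero, sub_zero, zero_add]
  simp only [Finset.sum_sub_distrib, Finset.sum_add_distrib, ← Finset.mul_sum, K.g_parseval,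
    K.g_frame]
  simp only [if_true, Finset.sum_const, Finset.card_univ, Fintype.card_fin, nsmul_eq_mul,
    K.g_xi_r, K.eta_xi, K.g_neg_r, K.compat_phi, K.phi_phi, K.g_add_r, K.g_smul_r, S]
  rw [K.g_symm (Y) X]
  have := K.compat_phi Y X
  rw [K.g_symm Y X] at this
  push_cast
  ring

lemma g_Q (X Y : Derivation ℝ C C) : K.g (K.Q X) Y = K.S X Y := by
  rw [Q, K.g_sum_l]
  simp only [K.g_smul_left, S, Finset.sum_mul]
  rw [Finset.sum_comm]
  refine Finset.sum_congr rfl fun j _ => ?_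
  rw [K.skew _ _ Y, K.g_symm _ Y] 
  have : ∀ i, K.g (K.Rm (K.e j) X (K.e i)) (K.e j) * K.g (K.e i) Y
    = -(K.g (K.Rm (K.e j) X (K.e j)) (K.e i) * K.g (K.e i) Y) := by
    intro i
    rw [K.skew]; ring
  simp only [this]
  rw [Finset.sum_neg_distrib, K.g_parseval, K.g_symm Y]

lemma Q_add (X Y : Derivation ℝ C C) : K.Q (X + Y) = K.Q X + K.Q Y := by
  apply K.g_ext
  intro W
  simp only [K.g_add_left, g_Q, S, K.Rm_add2, Finset.sum_add_distrib]

lemma Q_sub (X Y : Derivation ℝ C C) : K.Q (X - Y) = K.Q X - K.Q Y := by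
  rw [eq_sub_iff_add_eq, ← Q_add, sub_add_cancel]

end regular

end helpers

end KenmotsuManifold

open KenmotsuManifold in
/-- If the metric of a Kenmotsu manifold of dimension `2n+1` is a
gradient almost `*`-Ricci soliton with potential function `f` (gradient `F`)
and soliton function `λ`, then
`R(X,Y)Df = (∇_Y Q)X - (∇_X Q)Y + Y(λ)X - X(λ)Y + η(X)Y - η(Y)X`. -/
theorem stmt12 {n : ℕ} {C : Type*} [CommRing C] [Algebra ℝ C]
    (K : KenmotsuManifold n C) (f l : C) (F : Derivation ℝ C C)
    (h : K.IsGradAlmostStarRicciSoliton f F l) (X Y : Derivation ℝ C C) :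
    K.Rm X Y F = K.nablaQ Y X - K.nablaQ X Y + Y l • X - X l • Y
      + K.η X • Y - K.η Y • X := by
  by_cases hn : n = 0
  · subst hn
    have sp : ∀ V : Derivation ℝ C C, V = K.g V (K.e 0) • K.e 0 := by
      intro V
      conv_lhs => rw [K.frame_span V]
      simp
    have R0 : ∀ U V W, K.Rm U V W = 0 := by
      intro U V W
      have h0 : K.Rm (K.e 0) (K.e 0) W = 0 := by
        simp only [K.Rm_eq]; abel
      rw [sp U, sp V, K.Rm_smul, K.Rm_smul2, h0, smul_zero, smul_zero]
    have Q0 : ∀ U, K.Q U = 0 := by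
      intro U
      simp [Q, S, R0, K.g_zero_l]
    have N0 : ∀ U, K.nabla U 0 = 0 := by
      intro U
      simpa using K.nabla_sub_r U 0 0
    rw [R0, nablaQ, nablaQ, Q0, Q0, Q0, Q0, N0, N0]
    rw [sp X, sp Y]
    simp only [K.eta_smul, Derivation.smul_apply, smul_eq_mul]
    module
  · have ha := K.a_zero hn
    have hF : ∀ V, K.nabla V F = -K.Q V - (l + (2 * (n : C) - 1)) • V - K.η V • K.ξ := by
      intro V
      apply K.g_ext
      intro W
      have := h.2 V W
      rw [Sstar_eq ha] at this
      simp only [K.g_sub_l, K.g_neg_l, K.g_smul_left, g_Q, K.g_xi_l]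
      linear_combination this
    have c0 : ∀ V : Derivation ℝ C C, V (l + (2 * (n : C) - 1)) = V l := by
      intro V
      have : (2 * (n : C) - 1) = algebraMap ℝ C (2 * n - 1) := by
        simp only [map_sub, map_mul, map_ofNat, map_natCast, map_one]
      rw [map_add, this, Derivation.map_algebraMap, add_zero]
    have e1 := der_eta ha X Y
    have e2 := der_eta ha Y X
    rw [K.g_symm Y X] at e2
    rw [K.Rm_eq, hF X, hF Y, hF (K.nabla X Y), hF (K.nabla Y X)]
    simp only [K.nabla_sub_r, K.nabla_neg_r, K.nabla_leibniz, c0, nabla_xi0 ha, e1, e2, nablaQ]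
    module
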